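/- Let k ≥ 2 be a positive integer and let T be any fixed tree on k vertices. For every large enough integer n with k dividing n, in the unbiased Waiter-Client game on the edge set of K_n whose winning sets are the T-factors of K_n, we have ((k−1)/k)·n ≤ τ_WC(F_{n,T-fac}, 1) ≤ ((k−1)/k)·n + 1. -/

import Mathlib

open Finset

/-- `WaiterWins board b win t Cl W` means: starting from the position where Client owns the
elements of `Cl` and Waiter owns the elements of `W`, Waiter can force that within the next `t`
rounds of the `b`-biased Waiter-Client game on the board `board` a position is reached in which
the predicate `win` holds of (Client's elements, Waiter's elements).  In each round Waiter offers
`b+1` previously unclaimed board elements (or all remaining unclaimed elements, if fewer than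
`b+1` remain); Client claims exactly one of them, the rest go to Waiter. -/
def WaiterWins {X : Type*} [DecidableEq X] (board : Finset X) (b : ℕ)
    (win : Finset X → Finset X → Prop) :
    ℕ → Finset X → Finset X → Prop
  | 0, Cl, W => win Cl W
  | (t+1), Cl, W => win Cl W ∨
      ∃ O : Finset X, O.Nonempty ∧ O ⊆ board \ (Cl ∪ W) ∧
        O.card = min (b + 1) ((board \ (Cl ∪ W)).card) ∧
        ∀ x ∈ O, WaiterWins board b win t (insert x Cl) (W ∪ O.erase x)

/-- `tauWC board F b` : the smallest number of rounds within which Waiter can force Client's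
elements to contain some member of the winning family `F`, in the `b`-biased Waiter-Client game
on the board `board`. -/
noncomputable def tauWC {X : Type*} [DecidableEq X] (board : Finset X)
    (F : Set (Finset X)) (b : ℕ) : ℕ :=
  sInf {t | WaiterWins board b (fun Cl _ => ∃ A ∈ F, A ⊆ Cl) t ∅ ∅}

/-- The edge set of the complete graph on `Fin n`. -/
def Kedges (n : ℕ) : Finset (Sym2 (Fin n)) :=
  Finset.univ.filter (fun e => ¬ e.IsDiag)

/-- The family of edge sets of `H`-factors of `K_n`, where `H` is the graph on `Fin k` with
edge set `E`: vertex-disjoint unions of copies of `H` covering all `n` vertices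
(each of the `n/k` copies is given by an embedding `g i`, and the copies partition `Fin n`). -/
def factorFamily (k n : ℕ) (E : Set (Sym2 (Fin k))) : Set (Finset (Sym2 (Fin n))) :=
  {F | ∃ g : Fin (n / k) → Fin k → Fin n,
    (∀ v : Fin n, ∃! p : Fin (n / k) × Fin k, g p.1 p.2 = v) ∧
    (F : Set (Sym2 (Fin n))) = ⋃ i : Fin (n / k), Sym2.map (g i) '' E}

/-!
Every `T`-factor has `(k - 1) * (n / k)` edges and Client gains one edge per round, whence the lower
bound. For the upper bound Waiter builds the `n / k` copies of `T` in parallel, one leaf at a time: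
each stage matches the `n / k` vertices at which the next leaves are attached into the set of unused
vertices. Offering two edges that join an unused vertex to two vertices still without a leaf wastes
no round, whichever edge Client takes. This breaks down for the last vertex of the stage, at which
Waiter offers edges to two unused vertices instead. Of these two edges, the one that goes to Waiter
is the only claimed edge at the vertices that remain unused, and the next stage starts by using the
unused endpoint of this edge. In the last stage there are no spare vertices, so a vertex `z` and an
unused vertex `a` remain; one additional round suffices to join them by an augmenting path.
-/

section Forcing

variable {α : Type*} [DecidableEq α] {b s t : ℕ} {C U : Finset α}
  {P Q : Finset α → Finset α → Prop}

/-- Waiter can force that after exactly `t` full rounds of the `b`-biased game the predicate `P`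
holds of (Client's elements, unclaimed elements), starting from `C` and `U`. Recording the unclaimed
elements instead of Waiter's makes the board disappear from the notation. -/
def WaiterForces (b : ℕ) (P : Finset α → Finset α → Prop) :
    ℕ → Finset α → Finset α → Prop
  | 0, C, U => P C U
  | t + 1, C, U => ∃ O ⊆ U, #O = b + 1 ∧ ∀ e ∈ O, WaiterForces b P t (insert e C) (U \ O)

lemma WaiterForces.trans (hP : WaiterForces b P s C U)
    (hQ : ∀ C' U', C ⊆ C' → P C' U' → WaiterForces b Q t C' U') :
    WaiterForces b Q (t + s) C U := by
  induction s generalizing C U with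
  | zero => exact hQ C U Subset.rfl hP
  | succ s ih =>
    obtain ⟨O, hOU, hO, hP⟩ := hP
    exact ⟨O, hOU, hO, fun e he => ih (hP e he) fun C' U' hC =>
      hQ C' U' ((subset_insert e C).trans hC)⟩

lemma WaiterForces.mono (hP : WaiterForces b P t C U)
    (hPQ : ∀ C' U', C ⊆ C' → P C' U' → Q C' U') : WaiterForces b Q t C U :=
  t.zero_add ▸ hP.trans (t := 0) hPQ

lemma WaiterForces.waiterWins {board Cl W : Finset α} {win : Finset α → Finset α → Prop}
    (h : WaiterForces b P t Cl (board \ (Cl ∪ W)))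
    (hwin : ∀ Cl' W', P Cl' (board \ (Cl' ∪ W')) → win Cl' W') :
    WaiterWins board b win t Cl W := by
  induction t generalizing Cl W with
  | zero => exact hwin Cl W h
  | succ t ih =>
    obtain ⟨O, hOU, hO, h⟩ := h
    refine .inr ⟨O, card_pos.1 (by omega), hOU, ?_, fun e he => ih ?_⟩
    · rw [hO, min_eq_left (hO ▸ card_le_card hOU)]
    · have hunclaimed : board \ (insert e Cl ∪ (W ∪ O.erase e)) = (board \ (Cl ∪ W)) \ O := by
        rw [sdiff_sdiff_left, sup_eq_union]
        congr 1
        grind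
      exact hunclaimed ▸ h e he

end Forcing

section WinningTime

variable {α : Type*} [DecidableEq α] {board : Finset α} {b s t : ℕ} {F : Set (Finset α)}

lemma WaiterWins.exists_card_le {Cl W : Finset α}
    (h : WaiterWins board b (fun Cl _ => ∃ A ∈ F, A ⊆ Cl) t Cl W) :
    ∃ A ∈ F, #A ≤ #Cl + t := by
  induction t generalizing Cl W with
  | zero =>
    obtain ⟨A, hA, hAC⟩ := h
    exact ⟨A, hA, card_le_card hAC⟩
  | succ t ih =>
    obtain ⟨A, hA, hAC⟩ | ⟨O, ⟨e, he⟩, -, -, h⟩ := h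
    · exact ⟨A, hA, (card_le_card hAC).trans (Nat.le_add_right _ _)⟩
    · obtain ⟨A, hA, hAC⟩ := ih (h e he)
      exact ⟨A, hA, hAC.trans (by have := card_insert_le e Cl; omega)⟩

lemma tauWC_le_of_waiterForces
    (h : WaiterForces b (fun C _ => ∃ A ∈ F, A ⊆ C) t ∅ board) : tauWC board F b ≤ t :=
  Nat.sInf_le <| WaiterForces.waiterWins (by simpa using h) fun _ _ => id

-- `tauWC` takes the junk value `0` when Waiter has no winning strategy.
lemma le_tauWC_of_waiterForces
    (h : WaiterForces b (fun C _ => ∃ A ∈ F, A ⊆ C) t ∅ board) (hF : ∀ A ∈ F, s ≤ #A) :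
    s ≤ tauWC board F b := by
  have hne : {t | WaiterWins board b (fun Cl _ => ∃ A ∈ F, A ⊆ Cl) t ∅ ∅}.Nonempty :=
    ⟨t, WaiterForces.waiterWins (by simpa using h) fun _ _ => id⟩
  obtain ⟨A, hA, hAt⟩ := WaiterWins.exists_card_le (Nat.sInf_mem hne)
  rw [card_empty, zero_add] at hAt
  exact (hF A hA).trans hAt

end WinningTime

section Matchings

variable {V : Type*} {C C' : Finset (Sym2 V)} {X X' A A' : Finset V}

/-- `C` contains a perfect matching between the vertex sets `X` and `A`. -/
def HasMatching (C : Finset (Sym2 V)) (X A : Finset V) : Prop :=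
  ∃ f : V → V, Set.BijOn f X A ∧ ∀ x ∈ X, s(x, f x) ∈ C

namespace HasMatching

protected lemma empty : HasMatching C ∅ ∅ :=
  ⟨id, by simp, by simp⟩

protected lemma singleton {x a : V} (h : s(x, a) ∈ C) : HasMatching C {x} {a} :=
  ⟨fun _ => a, by simp, by simpa using h⟩

lemma mono (h : HasMatching C X A) (hC : C ⊆ C') : HasMatching C' X A := by
  obtain ⟨f, hf, hfC⟩ := h
  exact ⟨f, hf, fun x hx => hC (hfC x hx)⟩

lemma card_eq (h : HasMatching C X A) : #X = #A := by
  obtain ⟨f, hf, -⟩ := h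
  exact hf.finsetCard_eq

lemma symm (h : HasMatching C X A) : HasMatching C A X := by
  obtain ⟨f, hf, hfC⟩ := h
  obtain rfl | ⟨x, -⟩ := X.eq_empty_or_nonempty
  · obtain rfl : A = ∅ := by simpa using hf.finsetCard_eq.symm
    exact .empty
  have : Nonempty V := ⟨x⟩
  have hinv := hf.invOn_invFunOn
  have hg := hf.symm hinv.symm
  refine ⟨Function.invFunOn f X, hg, fun a ha => ?_⟩
  simpa only [hinv.2 ha, Sym2.eq_swap] using hfC _ (hg.mapsTo ha)

variable [DecidableEq V]

protected lemma union (h : HasMatching C X A) (h' : HasMatching C X' A') (hX : Disjoint X X')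
    (hA : Disjoint A A') : HasMatching C (X ∪ X') (A ∪ A') := by
  obtain ⟨f, hf, hfC⟩ := h
  obtain ⟨f', hf', hfC'⟩ := h'
  let g := fun v => if v ∈ X then f v else f' v
  have hg : ∀ x ∈ X, g x = f x := fun x hx => if_pos hx
  have hg' : ∀ x ∈ X', g x = f' x := fun x hx => if_neg (disjoint_right.1 hX hx)
  refine ⟨g, ?_, fun x hx => ?_⟩
  · rw [coe_union, coe_union]
    have hgX : Set.BijOn g X A := hf.congr fun x hx => (hg x hx).symm
    have hgX' : Set.BijOn g X' A' := hf'.congr fun x hx => (hg' x hx).symm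
    refine hgX.union hgX' ((Set.injOn_union (disjoint_coe.2 hX)).2
      ⟨hgX.injOn, hgX'.injOn, fun x hx x' hx' h => ?_⟩)
    exact disjoint_left.1 hA (hgX.mapsTo hx) (h ▸ hgX'.mapsTo hx')
  · obtain hx | hx := mem_union.1 hx
    · exact hg x hx ▸ hfC x hx
    · exact hg' x hx ▸ hfC' x hx

protected lemma insert {x a : V} (h : HasMatching C X A) (hxa : s(x, a) ∈ C) (hx : x ∉ X)
    (ha : a ∉ A) : HasMatching C (insert x X) (insert a A) :=
  (HasMatching.singleton hxa).union h (disjoint_singleton_left.2 hx) (disjoint_singleton_left.2 ha)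

lemma exists_erase (h : HasMatching C X A) {x : V} (hx : x ∈ X) :
    ∃ a ∈ A, s(x, a) ∈ C ∧ HasMatching C (X.erase x) (A.erase a) := by
  obtain ⟨f, hf, hfC⟩ := h
  refine ⟨f x, hf.mapsTo hx, hfC x hx, f, ?_, fun y hy => hfC y (mem_of_mem_erase hy)⟩
  simpa only [coe_erase] using hf.sdiff_singleton hx

end HasMatching

end Matchings

section Edges

variable {V : Type*} [DecidableEq V] {X X' A A' F F' : Finset V} {U U' : Finset (Sym2 V)}

/-- The edges with one endpoint in `X` and the other in `A`. -/
def edgesBetween (X A : Finset V) : Finset (Sym2 V) :=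
  (X ×ˢ A).image fun p => s(p.1, p.2)

lemma mk_mem_edgesBetween {x a : V} :
    s(x, a) ∈ edgesBetween X A ↔ x ∈ X ∧ a ∈ A ∨ a ∈ X ∧ x ∈ A := by
  simp only [edgesBetween, mem_image, mem_product, Prod.exists, Sym2.eq_iff]
  grind

lemma edgesBetween_comm : edgesBetween X A = edgesBetween A X := by
  ext e
  induction e with | _ x a
  simp only [mk_mem_edgesBetween]
  tauto

lemma edgesBetween_mono (hX : X ⊆ X') (hA : A ⊆ A') :
    edgesBetween X A ⊆ edgesBetween X' A' :=
  image_subset_image (product_subset_product hX hA)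

lemma disjoint_edgesBetween (h : Disjoint (X ∪ X') (A ∪ A'))
    (h' : Disjoint X X' ∨ Disjoint A A') :
    Disjoint (edgesBetween X A) (edgesBetween X' A') := by
  rw [disjoint_left]
  intro e
  induction e with | _ x a
  simp only [disjoint_left, mem_union] at h h'
  simp only [mk_mem_edgesBetween]
  grind

/-- Every edge with an endpoint in `F` is still unclaimed. -/
def Untouched (U : Finset (Sym2 V)) (F : Finset V) : Prop :=
  ∀ a ∈ F, ∀ x, x ≠ a → s(x, a) ∈ U

/-- Every edge with an endpoint in `F` is still unclaimed, with the possible exception of one edge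
leaving `F`. This is the state in which an odd offer leaves the unused vertices. -/
def NearlyUntouched (U : Finset (Sym2 V)) (F : Finset V) : Prop :=
  ∃ h ∈ F, ∃ u ∉ F, Untouched (insert s(u, h) U) F

lemma Untouched.edgesBetween_subset (h : Untouched U F) (hXF : Disjoint X F) (hA : A ⊆ F) :
    edgesBetween X A ⊆ U := by
  intro e he
  induction e with | _ x a
  obtain ⟨hx, ha⟩ | ⟨ha, hx⟩ := mk_mem_edgesBetween.1 he
  · exact h a (hA ha) x fun hxa => disjoint_left.1 hXF hx (hxa ▸ hA ha)
  · exact Sym2.eq_swap ▸ h x (hA hx) a fun hxa => disjoint_left.1 hXF ha (hxa ▸ hA hx)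

lemma Untouched.of_sdiff_subset (h : Untouched U F) (hF : F' ⊆ F) (hX : Disjoint X F')
    (hA : Disjoint A F') (hU : U \ edgesBetween X A ⊆ U') : Untouched U' F' := by
  intro a ha x hxa
  refine hU (mem_sdiff.2 ⟨h a (hF ha) x hxa, ?_⟩)
  rw [mk_mem_edgesBetween]
  rintro (⟨-, haA⟩ | ⟨haX, -⟩)
  · exact disjoint_left.1 hA haA ha
  · exact disjoint_left.1 hX haX ha

lemma Untouched.erase_of_insert {u h : V} (hU : Untouched (insert s(u, h) U) F) (hu : u ∉ F) :
    Untouched U (F.erase h) := by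
  intro a ha x hxa
  obtain ⟨hah, haF⟩ := mem_erase.1 ha
  refine (mem_insert.1 (hU a haF x hxa)).resolve_left fun heq => ?_
  obtain ⟨-, rfl⟩ | ⟨-, rfl⟩ := Sym2.eq_iff.1 heq
  · exact hah rfl
  · exact hu haF

end Edges

section ForcingMatchings

variable {V : Type*} [DecidableEq V] {X A F : Finset V} {C U : Finset (Sym2 V)} {b t : ℕ}

lemma waiterForces_star {z : V} (hA : b < #A) (hU : edgesBetween A {z} ⊆ U) :
    WaiterForces b (fun C' U' => (∃ a ∈ A, s(a, z) ∈ C') ∧ U \ edgesBetween A {z} ⊆ U')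
      1 C U := by
  obtain ⟨S, hSA, hS⟩ := exists_subset_card_eq (Nat.succ_le_of_lt hA)
  let O := S.image fun a => s(a, z)
  have hinj : Function.Injective fun a => s(a, z) := fun a a' h => Sym2.congr_left.1 h
  have hO : O ⊆ edgesBetween A {z} := by
    intro e he
    obtain ⟨a, ha, rfl⟩ := mem_image.1 he
    exact mk_mem_edgesBetween.2 (.inl ⟨hSA ha, mem_singleton_self z⟩)
  refine ⟨O, hO.trans hU, by rw [card_image_of_injective S hinj, hS], fun e he => ?_⟩
  obtain ⟨a, ha, rfl⟩ := mem_image.1 he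
  exact ⟨⟨a, hSA ha, mem_insert_self _ _⟩, sdiff_subset_sdiff Subset.rfl hO⟩

lemma waiterForces_saturate (hXA : Disjoint X A) (hcard : #A + b ≤ #X)
    (hU : edgesBetween X A ⊆ U) :
    WaiterForces b (fun C' U' => (∃ Y ⊆ X, HasMatching C' Y A) ∧ U \ edgesBetween X A ⊆ U')
      #A C U := by
  induction A using Finset.induction_on generalizing X C U with
  | empty => exact ⟨⟨∅, empty_subset X, .empty⟩, sdiff_subset⟩
  | insert a A ha ih =>
    rw [card_insert_of_notMem ha] at hcard ⊢
    obtain ⟨haX, hXA⟩ := disjoint_insert_right.1 hXA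
    have hstar : edgesBetween X {a} ⊆ edgesBetween X (insert a A) :=
      edgesBetween_mono Subset.rfl (singleton_subset_iff.2 (mem_insert_self a A))
    have hrest (x : V) : edgesBetween (X.erase x) A ⊆ edgesBetween X (insert a A) :=
      edgesBetween_mono (erase_subset x X) (subset_insert a A)
    refine (waiterForces_star (by omega) (hstar.trans hU)).trans ?_
    rintro C₁ U₁ - ⟨⟨x, hx, hxa⟩, hU₁⟩
    have hfree : edgesBetween (X.erase x) A ⊆ U₁ := by
      refine (subset_sdiff.2 ⟨(hrest x).trans hU, disjoint_edgesBetween ?_ (.inr ?_)⟩).trans hU₁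
      · rw [union_eq_right.2 (erase_subset x X), disjoint_union_right]
        exact ⟨hXA, disjoint_singleton_right.2 haX⟩
      · exact disjoint_singleton_right.2 ha
    refine (ih (hXA.mono_left (erase_subset x X)) (by rw [card_erase_of_mem hx]; omega) hfree).mono
      fun C₂ U₂ hC₂ ⟨⟨Y, hY, hM⟩, hU₂⟩ => ⟨⟨insert x Y, ?_, ?_⟩, fun e he => hU₂ ?_⟩
    · exact insert_subset hx (hY.trans (erase_subset x X))
    · exact hM.insert (hC₂ hxa) (fun hxY => notMem_erase x X (hY hxY)) ha
    · obtain ⟨heU, he⟩ := mem_sdiff.1 he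
      exact mem_sdiff.2 ⟨hU₁ (mem_sdiff.2 ⟨heU, fun h => he (hstar h)⟩), fun h => he (hrest x h)⟩

lemma waiterForces_saturate_erase (hXA : Disjoint X A) (hcard : #X = #A + 1)
    (hU : edgesBetween X A ⊆ U) :
    WaiterForces 1 (fun C' U' => (∃ z ∈ X, HasMatching C' (X.erase z) A) ∧
      U \ edgesBetween X A ⊆ U') #A C U := by
  refine (waiterForces_saturate hXA hcard.ge hU).mono fun C' U' _ ⟨⟨Y, hYX, hM⟩, hU'⟩ => ⟨?_, hU'⟩
  obtain ⟨z, hz⟩ : ∃ z, X \ Y = {z} := by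
    rw [← card_eq_one, card_sdiff_of_subset hYX, hM.card_eq]
    omega
  refine ⟨z, sdiff_subset (hz.ge (mem_singleton_self z)), ?_⟩
  rwa [← sdiff_singleton_eq_erase, ← hz, Finset.sdiff_sdiff_eq_self hYX]

lemma Untouched.waiterForces_edge {z : V} (hU : Untouched U F) (hz : z ∉ F) (hF : 2 ≤ #F) :
    WaiterForces 1 (fun C' U' => ∃ c ∈ F, s(z, c) ∈ C' ∧ NearlyUntouched U' (F.erase c))
      1 C U := by
  obtain ⟨S, hSF, hS⟩ := exists_subset_card_eq hF
  have hSz : edgesBetween S {z} ⊆ U := by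
    rw [edgesBetween_comm]
    exact hU.edgesBetween_subset (disjoint_singleton_left.2 hz) hSF
  refine (waiterForces_star (by omega) hSz).mono ?_
  rintro C' U' - ⟨⟨c, hc, hcz⟩, hU'⟩
  obtain ⟨d, hd⟩ : ∃ d, S.erase c = {d} := card_eq_one.1 (by rw [card_erase_of_mem hc, hS])
  have hdF : d ∈ F.erase c := erase_subset_erase c hSF (hd.ge (mem_singleton_self d))
  refine ⟨c, hSF hc, Sym2.eq_swap ▸ hcz, d, hdF, z, fun h => hz (mem_of_mem_erase h), ?_⟩
  intro a ha x hxa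
  obtain ⟨hac, haF⟩ := mem_erase.1 ha
  by_cases hoffered : s(x, a) ∈ edgesBetween S {z}
  · obtain ⟨-, haz⟩ | ⟨haS, hxz⟩ := mk_mem_edgesBetween.1 hoffered
    · exact absurd (mem_singleton.1 haz ▸ haF) hz
    · obtain rfl := mem_singleton.1 hxz
      obtain rfl := mem_singleton.1 (hd.le (mem_erase.2 ⟨hac, haS⟩))
      exact mem_insert_self _ _
  · exact mem_insert_of_mem (hU' (mem_sdiff.2 ⟨hU a haF x hxa, hoffered⟩))

lemma Untouched.waiterForces_matching (hU : Untouched U F) (hXF : Disjoint X F) (hX : X.Nonempty)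
    (hcard : #X < #F) :
    WaiterForces 1 (fun C' U' => ∃ A ⊆ F, HasMatching C' X A ∧ NearlyUntouched U' (F \ A))
      #X C U := by
  have hpos := hX.card_pos
  obtain ⟨A, hA, hAcard⟩ := exists_subset_card_eq (show #X - 1 ≤ #F by omega)
  rw [show #X = 1 + #A by omega]
  refine (waiterForces_saturate_erase (hXF.mono_right hA) (by omega)
    (hU.edgesBetween_subset hXF hA)).trans ?_
  rintro C₁ U₁ - ⟨⟨z, hz, hM⟩, hU₁⟩
  have hFA : Untouched U₁ (F \ A) :=
    hU.of_sdiff_subset sdiff_subset (hXF.mono_right sdiff_subset) disjoint_sdiff hU₁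
  have hzF : z ∉ F \ A := fun h => disjoint_left.1 hXF hz (sdiff_subset h)
  refine (hFA.waiterForces_edge hzF (by rw [card_sdiff_of_subset hA]; omega)).mono ?_
  rintro C₂ U₂ hC ⟨c, hc, hzc, hU₂⟩
  obtain ⟨hcF, hcA⟩ := mem_sdiff.1 hc
  refine ⟨insert c A, insert_subset hcF hA, ?_, by rwa [sdiff_insert]⟩
  simpa only [insert_erase hz] using (hM.mono hC).insert hzc (notMem_erase z X) hcA

-- The exceptional edge is dealt with by first matching its endpoint `h` along some other edge.
lemma NearlyUntouched.waiterForces_of_erase {Q : Finset (Sym2 V) → Finset V → Prop}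
    (hU : NearlyUntouched U F) (hXF : Disjoint X F) (hX : 3 ≤ #X)
    (hQ : ∀ x ∈ X, ∀ a ∈ F, ∀ C' U', Untouched U' (F.erase a) →
      WaiterForces 1 (fun C'' U'' => ∃ A ⊆ F.erase a, HasMatching C'' (X.erase x) A ∧
        Q U'' (F.erase a \ A)) t C' U') :
    WaiterForces 1 (fun C' U' => ∃ A ⊆ F, HasMatching C' X A ∧ Q U' (F \ A)) (t + 1) C U := by
  obtain ⟨h, hhF, u, hu, hU⟩ := hU
  have hXu : 1 < #(X.erase u) := by
    have := pred_card_le_card_erase (s := X) (a := u)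
    omega
  have hstar : edgesBetween (X.erase u) {h} ⊆ U := by
    have hXu := hU.edgesBetween_subset (hXF.mono_left (erase_subset u X))
      (singleton_subset_iff.2 hhF)
    refine (subset_insert_iff_of_notMem fun hmem => ?_).1 hXu
    obtain ⟨hu', -⟩ | ⟨hh, -⟩ := mk_mem_edgesBetween.1 hmem
    · exact notMem_erase u X hu'
    · exact disjoint_left.1 hXF (mem_of_mem_erase hh) hhF
  refine (waiterForces_star hXu hstar).trans ?_
  rintro C₁ U₁ - ⟨⟨x, hx, hxh⟩, hU₁⟩
  have hxX := mem_of_mem_erase hx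
  have hFree : Untouched U₁ (F.erase h) :=
    (hU.erase_of_insert hu).of_sdiff_subset Subset.rfl
      (hXF.mono (erase_subset u X) (erase_subset h F)) (by simp) hU₁
  refine (hQ x hxX h hhF C₁ U₁ hFree).mono ?_
  rintro C₂ U₂ hC ⟨A, hA, hM, hQA⟩
  have hhA : h ∉ A := fun hmem => notMem_erase h F (hA hmem)
  refine ⟨insert h A, insert_subset hhF (hA.trans (erase_subset h F)), ?_, ?_⟩
  · simpa only [insert_erase hxX] using hM.insert (hC hxh) (notMem_erase x X) hhA
  · rwa [sdiff_insert, ← erase_sdiff_comm]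

lemma NearlyUntouched.waiterForces_matching (hU : NearlyUntouched U F) (hXF : Disjoint X F)
    (hX : 3 ≤ #X) (hcard : #X < #F) :
    WaiterForces 1 (fun C' U' => ∃ A ⊆ F, HasMatching C' X A ∧ NearlyUntouched U' (F \ A))
      #X C U := by
  rw [show #X = #X - 1 + 1 by omega]
  refine hU.waiterForces_of_erase hXF hX fun x hx a ha C' U' hU' => ?_
  rw [← card_erase_of_mem hx]
  refine hU'.waiterForces_matching (hXF.mono (erase_subset x X) (erase_subset a F)) ?_ ?_
  · exact card_pos.1 (by rw [card_erase_of_mem hx]; omega)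
  · rw [card_erase_of_mem hx, card_erase_of_mem ha]
    omega

lemma HasMatching.waiterForces_augment {z a : V} (hM : HasMatching C X A) (hX : 1 < #X)
    (hXA : Disjoint (insert z X) (insert a A)) (hz : z ∉ X) (ha : a ∉ A)
    (haU : edgesBetween X {a} ⊆ U) (hzU : edgesBetween {z} (insert a A) ⊆ U) :
    WaiterForces 1 (fun C' _ => HasMatching C' (insert z X) (insert a A)) 2 C U := by
  refine (waiterForces_star hX haU).trans (t := 1) ?_
  rintro C₁ U₁ hC₁ ⟨⟨x, hx, hxa⟩, hU₁⟩
  obtain ⟨c, hc, -, hM'⟩ := (hM.mono hC₁).exists_erase hx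
  have hca : c ≠ a := fun h => ha (h ▸ hc)
  have hfree : edgesBetween {c, a} {z} ⊆ U₁ := by
    have hcaA : edgesBetween {c, a} {z} ⊆ edgesBetween {z} (insert a A) := by
      rw [edgesBetween_comm]
      exact edgesBetween_mono Subset.rfl (by simp [insert_subset_iff, hc])
    have hdisj : Disjoint (edgesBetween {z} (insert a A)) (edgesBetween X {a}) :=
      disjoint_edgesBetween (hXA.mono (by simp) (by simp)) (.inl (disjoint_singleton_left.2 hz))
    exact hcaA.trans ((subset_sdiff.2 ⟨hzU, hdisj⟩).trans hU₁)
  refine (waiterForces_star (by rw [card_pair hca]; decide) hfree).mono ?_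
  rintro C₂ U₂ hC₂ ⟨⟨d, hd, hdz⟩, -⟩
  rw [Sym2.eq_swap] at hdz
  obtain rfl | hda := mem_insert.1 hd
  -- Client joined `z` to the partner `d` of `x`, which makes `z d x a` an augmenting path.
  · have hMx := (hM'.mono hC₂).insert (hC₂ hxa) (notMem_erase x X)
      fun h => ha (mem_of_mem_erase h)
    rw [insert_erase hx] at hMx
    simpa only [insert_comm d a, insert_erase hc] using hMx.insert hdz hz (by simp [hca])
  · obtain rfl := mem_singleton.1 hda
    exact (hM.mono (hC₁.trans hC₂)).insert hdz hz ha

-- Matching `P` into `S` ahead of the other vertices ensures that no edge between the vertex `z`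
-- left over at the end and the partners `R` of `P` is ever offered.
lemma waiterForces_nearPerfectMatching {P S : Finset V} {a : V} (hXF : Disjoint X F)
    (hU : edgesBetween X F ⊆ U) (hcard : #X = #F) (hPX : P ⊆ X) (hSF : S ⊆ F) (haF : a ∈ F)
    (haS : a ∉ S) (hPS : #P < #S) :
    WaiterForces 1 (fun C' U' => ∃ z ∈ X \ P, ∃ R ⊆ S, HasMatching C' P R ∧
        HasMatching C' (X \ insert z P) (F \ insert a R) ∧
        edgesBetween P {a} ⊆ U' ∧ edgesBetween {z} (insert a R) ⊆ U')
      (#X - 1) C U := by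
  have hdisj {Y Y' B B' : Finset V} (hY : Y ⊆ X) (hY' : Y' ⊆ X) (hB : B ⊆ F) (hB' : B' ⊆ F)
      (h : Disjoint Y Y' ∨ Disjoint B B') : Disjoint (edgesBetween Y B) (edgesBetween Y' B') :=
    disjoint_edgesBetween (hXF.mono (union_subset hY hY') (union_subset hB hB')) h
  have hsub {Y B : Finset V} (hY : Y ⊆ X) (hB : B ⊆ F) : edgesBetween Y B ⊆ U :=
    (edgesBetween_mono hY hB).trans hU
  have hSFa : #S ≤ #F - 1 := card_erase_of_mem haF ▸ card_le_card (subset_erase.2 ⟨hSF, haS⟩)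
  rw [show #X - 1 = #F - 1 - #P + #P by omega]
  refine (waiterForces_saturate (hXF.mono hPX hSF).symm hPS
    (edgesBetween_comm.trans_subset (hsub hPX hSF))).trans ?_
  rw [edgesBetween_comm]
  rintro C₁ U₁ - ⟨⟨R, hRS, hRP⟩, hU₁⟩
  have hRF := hRS.trans hSF
  have hBF : F.erase a \ R ⊆ F := sdiff_subset.trans (erase_subset a F)
  have hB : #(F.erase a \ R) = #F - 1 - #P := by
    rw [card_sdiff_of_subset (subset_erase.2 ⟨hRF, fun h => haS (hRS h)⟩), card_erase_of_mem haF,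
      hRP.card_eq]
  have hY : #(X \ P) = #(F.erase a \ R) + 1 := by
    rw [card_sdiff_of_subset hPX]
    omega
  rw [← hB]
  have hfree : edgesBetween (X \ P) (F.erase a \ R) ⊆ U₁ := (subset_sdiff.2
    ⟨hsub sdiff_subset hBF, hdisj sdiff_subset hPX hBF hSF (.inl sdiff_disjoint)⟩).trans hU₁
  refine (waiterForces_saturate_erase (hXF.mono sdiff_subset hBF) hY hfree).mono ?_
  rintro C₂ U₂ hC₂ ⟨⟨z, hz, hM⟩, hU₂⟩
  obtain ⟨hzX, hzP⟩ := mem_sdiff.1 hz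
  have hkeep {Y B : Finset V} (hY : Y ⊆ X) (hB : B ⊆ F) (h : Disjoint Y P ∨ Disjoint B S)
      (h' : Disjoint Y (X \ P) ∨ Disjoint B (F.erase a \ R)) : edgesBetween Y B ⊆ U₂ :=
    (subset_sdiff.2 ⟨(subset_sdiff.2 ⟨hsub hY hB, hdisj hY hPX hB hSF h⟩).trans hU₁,
      hdisj hY sdiff_subset hB hBF h'⟩).trans hU₂
  rw [erase_sdiff_comm, ← sdiff_insert, ← sdiff_insert] at hM
  refine ⟨z, hz, R, hRS, hRP.symm.mono hC₂, hM, ?_, ?_⟩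
  · exact hkeep hPX (singleton_subset_iff.2 haF) (.inr (disjoint_singleton_left.2 haS))
      (.inl disjoint_sdiff)
  · exact hkeep (singleton_subset_iff.2 hzX) (insert_subset haF hRF)
      (.inl (disjoint_singleton_left.2 hzP))
      (.inr (disjoint_insert_left.2 ⟨by simp, disjoint_sdiff⟩))

lemma waiterForces_perfectMatching_of_edgesBetween_subset (hXF : Disjoint X F)
    (hU : edgesBetween X F ⊆ U) (hcard : #X = #F) (hF : 4 ≤ #F) :
    WaiterForces 1 (fun C' _ => HasMatching C' X F) (#X + 1) C U := by
  obtain ⟨P, hPX, hP⟩ := exists_subset_card_eq (show 2 ≤ #X by omega)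
  obtain ⟨a, haF⟩ : F.Nonempty := card_pos.1 (by omega)
  obtain ⟨S, hSFa, hS⟩ := exists_subset_card_eq
    (show 3 ≤ #(F.erase a) by rw [card_erase_of_mem haF]; omega)
  obtain ⟨hSF, haS⟩ := subset_erase.1 hSFa
  rw [show #X + 1 = 2 + (#X - 1) by omega]
  refine (waiterForces_nearPerfectMatching hXF hU hcard hPX hSF haF haS (by omega)).trans ?_
  rintro C₁ U₁ - ⟨z, hz, R, hRS, hPR, hM, haU, hzU⟩
  obtain ⟨hzX, hzP⟩ := mem_sdiff.1 hz
  have hRF := hRS.trans hSF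
  have haR : a ∉ R := fun h => haS (hRS h)
  have hXz := insert_subset hzX hPX
  have hFa := insert_subset haF hRF
  refine (hPR.waiterForces_augment (by omega) (hXF.mono hXz hFa) hzP haR haU hzU).mono
    fun C₂ _ hC₂ hPRz => ?_
  simpa only [sdiff_union_of_subset hXz, sdiff_union_of_subset hFa] using
    (hM.mono hC₂).union hPRz sdiff_disjoint sdiff_disjoint

lemma NearlyUntouched.waiterForces_perfectMatching (hU : NearlyUntouched U F)
    (hXF : Disjoint X F) (hcard : #X = #F) (hF : 5 ≤ #F) :
    WaiterForces 1 (fun C' _ => HasMatching C' X F) (#X + 1) C U := by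
  have hforce := hU.waiterForces_of_erase (Q := fun _ B => B = ∅) (t := #X) (C := C) hXF (by omega)
    fun x hx a ha C' U' hU' => ?_
  · refine hforce.mono fun C' _ _ ⟨A, hA, hM, hFA⟩ => ?_
    rwa [hA.antisymm (sdiff_eq_empty_iff_subset.1 hFA)] at hM
  · have hXF' := hXF.mono (erase_subset x X) (erase_subset a F)
    have hX' := card_erase_of_mem hx
    have hF' := card_erase_of_mem ha
    rw [show #X = #(X.erase x) + 1 by omega]
    refine (waiterForces_perfectMatching_of_edgesBetween_subset hXF'
      (hU'.edgesBetween_subset hXF' Subset.rfl) (by omega) (by omega)).mono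
        fun _ _ _ hM => ⟨_, Subset.rfl, hM, Finset.sdiff_self _⟩

end ForcingMatchings

section Packings

variable {ι τ V : Type*} {T : SimpleGraph τ} {C C' U : Finset (Sym2 V)}

/-- The maps `v ↦ g (i, v)` are pairwise vertex-disjoint copies of `T` whose edges all belong
to `C`. -/
def IsPacking (T : SimpleGraph τ) (C : Finset (Sym2 V)) (g : ι × τ ↪ V) : Prop :=
  ∀ i ⦃u v⦄, T.Adj u v → s(g (i, u), g (i, v)) ∈ C

lemma exists_leaf_of_isTree [Finite τ] [Nontrivial τ] (hT : T.IsTree) :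
    ∃ (ℓ : τ) (w : ({ℓ}ᶜ : Set τ)), (∀ x, T.Adj ℓ x → x = w) ∧ (T.induce {ℓ}ᶜ).IsTree := by
  classical
  have := Fintype.ofFinite τ
  obtain ⟨ℓ, hℓ⟩ := hT.exists_vert_degree_one_of_nontrivial
  obtain ⟨w, hw, hunique⟩ := SimpleGraph.degree_eq_one_iff_existsUnique_adj.1 hℓ
  exact ⟨ℓ, ⟨w, hw.ne'⟩, hunique,
    hT.connected.induce_compl_singleton_of_degree_eq_one hℓ, hT.isAcyclic.induce _⟩

lemma exists_embedding_extend {ℓ : τ} (g : ι × ({ℓ}ᶜ : Set τ) ↪ V) {a : ι → V}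
    (ha : Function.Injective a) (hga : ∀ p i, g p ≠ a i) :
    ∃ g' : ι × τ ↪ V, (∀ i, g' (i, ℓ) = a i) ∧
      (∀ i (v : ({ℓ}ᶜ : Set τ)), g' (i, v) = g (i, v)) ∧
      Set.range g' = Set.range g ∪ Set.range a := by
  classical
  let onLeaf (p : {p : ι × τ // p.2 = ℓ}) : V := a p.1.1
  let offLeaf (p : {p : ι × τ // p.2 ≠ ℓ}) : V := g (p.1.1, ⟨p.1.2, p.2⟩)
  have hon : Function.Injective onLeaf := fun p q h =>
    Subtype.ext (Prod.ext (ha h) (p.2.trans q.2.symm))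
  have hoff : Function.Injective offLeaf := fun p q h => by
    have hpq := g.injective h
    simp only [Prod.mk.injEq] at hpq
    exact Subtype.ext (Prod.ext hpq.1 (congrArg Subtype.val hpq.2))
  let g' : ι × τ ↪ V := ⟨_, hon.dite _ hoff fun {_ _ _ _} h => hga _ _ h.symm⟩
  have hleaf (i : ι) : g' (i, ℓ) = a i := dif_pos rfl
  have hoffLeaf (i : ι) (v : ({ℓ}ᶜ : Set τ)) : g' (i, v) = g (i, v) := dif_neg v.2
  refine ⟨g', hleaf, hoffLeaf, Set.Subset.antisymm ?_ (Set.union_subset ?_ ?_)⟩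
  · rintro _ ⟨⟨i, v⟩, rfl⟩
    obtain rfl | hv := eq_or_ne v ℓ
    · exact .inr ⟨i, (hleaf i).symm⟩
    · exact .inl ⟨(i, ⟨v, hv⟩), (hoffLeaf i ⟨v, hv⟩).symm⟩
  · rintro _ ⟨⟨i, v⟩, rfl⟩
    exact ⟨(i, v), hoffLeaf i v⟩
  · rintro _ ⟨i, rfl⟩
    exact ⟨(i, ℓ), hleaf i⟩

variable [Fintype ι] [Fintype τ] [DecidableEq τ] [DecidableEq V]

lemma IsPacking.exists_extend_leaf {ℓ : τ} {w : ({ℓ}ᶜ : Set τ)} {A : Finset V}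
    {g : ι × ({ℓ}ᶜ : Set τ) ↪ V} (hg : IsPacking (T.induce {ℓ}ᶜ) C g)
    (hw : ∀ x, T.Adj ℓ x → x = w) (hA : Disjoint (univ.map g) A)
    (hM : HasMatching C (univ.image fun i => g (i, w)) A) :
    ∃ g' : ι × τ ↪ V, IsPacking T C g' ∧ univ.map g' = univ.map g ∪ A := by
  obtain ⟨f, hf, hfC⟩ := hM
  have hroot (i : ι) : g (i, w) ∈ univ.image fun i => g (i, w) := mem_image_of_mem _ (mem_univ i)
  have hinj : Function.Injective fun i => f (g (i, w)) := fun i j h =>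
    congrArg Prod.fst (g.injective (hf.injOn (hroot i) (hroot j) h))
  obtain ⟨g', hgℓ, hg', hrange⟩ := exists_embedding_extend g hinj fun p i h =>
    disjoint_left.1 hA (mem_map_of_mem g (mem_univ p)) (h ▸ hf.mapsTo (hroot i))
  have hleaf {i : ι} {x : τ} (hx : T.Adj ℓ x) : s(g' (i, x), g' (i, ℓ)) ∈ C := by
    rw [hw x hx, hgℓ, hg']
    exact hfC _ (hroot i)
  refine ⟨g', fun i u v huv => ?_, ?_⟩
  · obtain rfl | hu := eq_or_ne u ℓ
    · exact Sym2.eq_swap ▸ hleaf huv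
    obtain rfl | hv := eq_or_ne v ℓ
    · exact hleaf huv.symm
    · have hcopy := hg i (u := ⟨u, hu⟩) (v := ⟨v, hv⟩) huv
      rwa [← hg', ← hg'] at hcopy
  · rw [← coe_inj, coe_union, ← hf.image_eq]
    simpa only [coe_map, coe_image, coe_univ, Set.image_univ, ← Set.range_comp'] using hrange

variable [Fintype V]

lemma waiterForces_packing_of_leaf {Q : Finset (Sym2 V) → Finset V → Prop} {s t : ℕ} {ℓ : τ}
    {w : ({ℓ}ᶜ : Set τ)} (hw : ∀ x, T.Adj ℓ x → x = w)
    (hpacking : WaiterForces 1 (fun C' U' => ∃ g : ι × ({ℓ}ᶜ : Set τ) ↪ V,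
      IsPacking (T.induce {ℓ}ᶜ) C' g ∧ NearlyUntouched U' (univ.map g)ᶜ) s C U)
    (hmatching : ∀ X F C' U', Disjoint X F → #X = Fintype.card ι →
      #F = Fintype.card V - Fintype.card ι * (Fintype.card τ - 1) → NearlyUntouched U' F →
      WaiterForces 1 (fun C' U' => ∃ A ⊆ F, HasMatching C' X A ∧ Q U' (F \ A)) t C' U') :
    WaiterForces 1 (fun C' U' => ∃ g : ι × τ ↪ V, IsPacking T C' g ∧ Q U' (univ.map g)ᶜ)
      (t + s) C U := by
  refine hpacking.trans fun C' U' _ ⟨g, hg, hU'⟩ => (hmatching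
    (univ.image fun i => g (i, w)) (univ.map g)ᶜ C' U' ?_ ?_ ?_ hU').mono
      fun C'' U'' hC ⟨A, hA, hM, hQ⟩ => ?_
  · refine disjoint_compl_right.mono_left fun v hv => ?_
    obtain ⟨i, -, rfl⟩ := mem_image.1 hv
    exact mem_map_of_mem g (mem_univ _)
  · exact card_image_of_injective _ fun i j h => congrArg Prod.fst (g.injective h)
  · rw [card_compl, card_map, card_univ, Fintype.card_prod, Fintype.card_compl_set,
      Set.card_singleton]
  · obtain ⟨g', hg', hmap⟩ := IsPacking.exists_extend_leaf (fun i u v huv => hC (hg i huv)) hw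
      (subset_compl_iff_disjoint_left.1 hA) hM
    refine ⟨g', hg', ?_⟩
    rwa [hmap, compl_union, ← sdiff_eq_inter_compl]

omit [DecidableEq τ] in
lemma exists_isPacking_of_subsingleton [Subsingleton τ] [Nonempty ι] [Nonempty τ]
    (hV : Fintype.card ι * Fintype.card τ < Fintype.card V) (hU : Untouched U univ) :
    ∃ g : ι × τ ↪ V, IsPacking T C g ∧ NearlyUntouched U (univ.map g)ᶜ := by
  rw [← Fintype.card_prod] at hV
  obtain ⟨g⟩ := Function.Embedding.nonempty_of_card_le hV.le
  obtain ⟨h, hh⟩ : (univ.map g)ᶜ.Nonempty := by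
    rw [← card_pos, card_compl, card_map, card_univ]
    omega
  obtain ⟨p⟩ : Nonempty (ι × τ) := inferInstance
  refine ⟨g, fun i u v huv => absurd (Subsingleton.elim u v) huv.ne, h, hh, g p, by simp, ?_⟩
  exact fun a _ x hxa => mem_insert_of_mem (hU a (mem_univ a) x hxa)

omit [DecidableEq τ] in
lemma waiterForces_packing {N : ℕ} (hT : T.IsTree) (hτ : Fintype.card τ = N + 1)
    (hι : 3 ≤ Fintype.card ι) (hV : Fintype.card ι * Fintype.card τ < Fintype.card V)
    (hU : Untouched U univ) :
    WaiterForces 1 (fun C' U' => ∃ g : ι × τ ↪ V, IsPacking T C' g ∧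
      NearlyUntouched U' (univ.map g)ᶜ) (N * Fintype.card ι) C U := by
  classical
  induction N generalizing τ with
  | zero =>
    have : Subsingleton τ := Fintype.card_le_one_iff_subsingleton.1 hτ.le
    have : Nonempty τ := hT.connected.nonempty
    have : Nonempty ι := Fintype.card_pos_iff.1 (by omega)
    rw [zero_mul]
    exact exists_isPacking_of_subsingleton hV hU
  | succ N ih =>
    have : Nontrivial τ := Fintype.one_lt_card_iff_nontrivial.1 (by omega)
    obtain ⟨ℓ, w, hw, hT'⟩ := exists_leaf_of_isTree hT
    have hσ : Fintype.card ({ℓ}ᶜ : Set τ) = N + 1 := by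
      rw [Fintype.card_compl_set, Set.card_singleton, hτ, Nat.add_sub_cancel]
    rw [hτ, mul_add_one] at hV
    rw [add_one_mul, add_comm]
    refine waiterForces_packing_of_leaf hw (ih hT' hσ ?_) fun X F C' U' hXF hX hF hU' => ?_
    · rw [hσ]
      omega
    · rw [hτ, Nat.add_sub_cancel] at hF
      rw [← hX] at hι ⊢
      exact hU'.waiterForces_matching hXF hι (by omega)

omit [DecidableEq τ] in
lemma waiterForces_spanning_packing [Nontrivial τ] (hT : T.IsTree) (hι : 5 ≤ Fintype.card ι)
    (hV : Fintype.card ι * Fintype.card τ = Fintype.card V)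
    (hU : Untouched U univ) :
    WaiterForces 1 (fun C' _ => ∃ g : ι × τ ↪ V, IsPacking T C' g)
      ((Fintype.card τ - 1) * Fintype.card ι + 1) C U := by
  classical
  obtain ⟨N, hτ⟩ : ∃ N, Fintype.card τ = N + 1 + 1 :=
    Nat.exists_eq_add_of_le' Fintype.one_lt_card
  obtain ⟨ℓ, w, hw, hT'⟩ := exists_leaf_of_isTree hT
  have hσ : Fintype.card ({ℓ}ᶜ : Set τ) = N + 1 := by
    rw [Fintype.card_compl_set, Set.card_singleton, hτ, Nat.add_sub_cancel]
  rw [hτ, mul_add_one] at hV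
  have hσV : Fintype.card ι * Fintype.card ({ℓ}ᶜ : Set τ) < Fintype.card V := by
    rw [hσ]
    omega
  have hpacking := waiterForces_packing (C := C) hT' hσ (by omega) hσV hU
  rw [hτ, Nat.add_sub_cancel,
    show (N + 1) * Fintype.card ι + 1 = Fintype.card ι + 1 + N * Fintype.card ι by ring]
  refine (waiterForces_packing_of_leaf (Q := fun _ _ => True) hw hpacking
    fun X F C' U' hXF hX hF hU' => ?_).mono fun C' _ _ ⟨g, hg, _⟩ => ⟨g, hg⟩
  rw [hτ, Nat.add_sub_cancel] at hF
  rw [← hX]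
  exact (hU'.waiterForces_perfectMatching hXF (by omega) (by omega)).mono
    fun C'' _ _ hM => ⟨F, Subset.rfl, hM, trivial⟩

end Packings

section TreeFactors

variable {k n : ℕ}

lemma untouched_kedges : Untouched (Kedges n) univ :=
  fun a _ x hxa => mem_filter.2 ⟨mem_univ _, by simpa using hxa⟩

lemma IsPacking.exists_mem_factorFamily {T : SimpleGraph (Fin k)} {C : Finset (Sym2 (Fin n))}
    {g : Fin (n / k) × Fin k ↪ Fin n} (hg : IsPacking T C g) (hk : k ∣ n) :
    ∃ A ∈ factorFamily k n T.edgeSet, A ⊆ C := by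
  classical
  have hbij : Function.Bijective g :=
    (Fintype.bijective_iff_injective_and_card g).2 ⟨g.injective, by simp [Nat.div_mul_cancel hk]⟩
  refine ⟨univ.biUnion fun i => T.edgeFinset.image (Sym2.map fun v => g (i, v)),
    ⟨fun i v => g (i, v), hbij.existsUnique, by simp⟩, fun e he => ?_⟩
  simp only [mem_biUnion, mem_image, SimpleGraph.mem_edgeFinset] at he
  obtain ⟨i, -, e, he, rfl⟩ := he
  induction e with | _ u v
  exact hg i he

lemma card_of_mem_factorFamily {E : Set (Sym2 (Fin k))} {A : Finset (Sym2 (Fin n))}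
    (hA : A ∈ factorFamily k n E) : #A = E.ncard * (n / k) := by
  obtain ⟨g, hg, hA⟩ := hA
  have hinj {i j : Fin (n / k)} {u v : Fin k} (h : g i u = g j v) : i = j ∧ u = v :=
    Prod.mk.inj ((hg (g i u)).unique (y₁ := (i, u)) (y₂ := (j, v)) rfl h.symm)
  have hcopies : Function.Injective fun p : Fin (n / k) × Sym2 (Fin k) => Sym2.map (g p.1) p.2 := by
    rintro ⟨i, e⟩ ⟨j, e'⟩ h
    induction e with | _ u v
    induction e' with | _ u' v'
    obtain ⟨hu, hv⟩ | ⟨hu, hv⟩ := Sym2.eq_iff.1 h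
    · obtain ⟨rfl, rfl⟩ := hinj hu
      rw [(hinj hv).2]
    · obtain ⟨rfl, rfl⟩ := hinj hu
      rw [(hinj hv).2, Sym2.eq_swap]
  have hA' : (A : Set (Sym2 (Fin n))) =
      (fun p : Fin (n / k) × Sym2 (Fin k) => Sym2.map (g p.1) p.2) '' (Set.univ ×ˢ E) := by
    rw [hA]
    ext e
    simp
  rw [← Set.ncard_coe_finset, hA', Set.ncard_image_of_injective _ hcopies, Set.ncard_prod,
    Set.ncard_univ, Nat.card_fin, mul_comm]

lemma ncard_edgeSet_of_isTree {T : SimpleGraph (Fin k)} (hT : T.IsTree) :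
    T.edgeSet.ncard = k - 1 := by
  classical
  have hcard := hT.card_edgeFinset
  rw [Fintype.card_fin] at hcard
  rw [← SimpleGraph.coe_edgeFinset, Set.ncard_coe_finset]
  omega

lemma waiterForces_treeFactor {T : SimpleGraph (Fin k)} (hk : 2 ≤ k) (hT : T.IsTree)
    (hn : 5 * k ≤ n) (hkn : k ∣ n) :
    WaiterForces 1 (fun C _ => ∃ A ∈ factorFamily k n T.edgeSet, A ⊆ C)
      ((k - 1) * (n / k) + 1) ∅ (Kedges n) := by
  have : Nontrivial (Fin k) := Fin.nontrivial_iff_two_le.2 hk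
  have hι : 5 ≤ n / k := (Nat.le_div_iff_mul_le (by omega)).2 hn
  have hspan := waiterForces_spanning_packing (ι := Fin (n / k)) (C := ∅) hT (by simpa using hι)
    (by simp [Nat.div_mul_cancel hkn]) (untouched_kedges (n := n))
  rw [Fintype.card_fin, Fintype.card_fin] at hspan
  exact hspan.mono fun C' _ _ ⟨g, hg⟩ => hg.exists_mem_factorFamily hkn

end TreeFactors

/-- For every `k ≥ 2`, every tree `T` on `k` vertices, and every large enough `n` divisible by
`k`, in the unbiased Waiter-Client game on `K_n` whose winning sets are the `T`-factors of
`K_n`, we have `((k−1)/k)·n ≤ τ_WC(F_{n,T-fac}, 1) ≤ ((k−1)/k)·n + 1`. -/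
theorem WC_tree_factor :
    ∀ k : ℕ, 2 ≤ k → ∀ T : SimpleGraph (Fin k), T.IsTree →
      ∃ n₀ : ℕ, ∀ n : ℕ, n₀ ≤ n → k ∣ n →
        (k - 1) * (n / k) ≤ tauWC (Kedges n) (factorFamily k n T.edgeSet) 1 ∧
        tauWC (Kedges n) (factorFamily k n T.edgeSet) 1 ≤ (k - 1) * (n / k) + 1 := by
  intro k hk T hT
  refine ⟨5 * k, fun n hn hkn => ?_⟩
  have hforce := waiterForces_treeFactor hk hT hn hkn
  refine ⟨le_tauWC_of_waiterForces hforce fun A hA => ?_, tauWC_le_of_waiterForces hforce⟩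
  rw [card_of_mem_factorFamily hA, ncard_edgeSet_of_isTree hT]
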